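/- Let A satisfy (H1), β_i > -2 for all i ∈ I, and let u be a finite-energy radial solution of the singular Liouville system. If φ = (φ_1,...,φ_n) is a bounded solution of the linearized system (r φ_i'(r))' + Σ_{j=1}^n a_{ij} r^{β_j+1} e^{u_j(r)} φ_j(r) = 0 for r > 0, then there exists a constant C ∈ ℝ such that φ_i(r) = C (r u_i'(r) + 2 + β_i) for all r > 0 and all i ∈ I. -/

import Mathlib

open Set MeasureTheory

/-- Hypothesis (H1): symmetric, nonnegative entries, irreducible, invertible. -/
def H1 {n : ℕ} (A : Matrix (Fin n) (Fin n) ℝ) : Prop :=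
  A.IsSymm ∧ (∀ i j, 0 ≤ A i j) ∧
  (∀ S : Finset (Fin n), S.Nonempty → S ≠ Finset.univ → ∃ i ∈ S, ∃ j ∈ Sᶜ, A i j ≠ 0) ∧
  IsUnit A.det

/-- Radial solution of the singular Liouville system, with the finite-energy condition. -/
def RadialSolution {n : ℕ} (A : Matrix (Fin n) (Fin n) ℝ) (β : Fin n → ℝ)
    (u : Fin n → ℝ → ℝ) : Prop :=
  (∀ i, ∀ r > (0:ℝ), ContDiffAt ℝ 2 (u i) r) ∧
  (∀ i, ∀ r > (0:ℝ),
    deriv (deriv (u i)) r + (1 / r) * deriv (u i) r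
      + ∑ j, A i j * r ^ β j * Real.exp (u j r) = 0) ∧
  (∀ i, IntegrableOn (fun r : ℝ => r ^ (β i + 1) * Real.exp (u i r)) (Set.Ioi 0))

/-- Solution of the linearized system (rφ_i')' + Σ_j a_{ij} r^{β_j+1} e^{u_j} φ_j = 0. -/
def LinearizedSolution {n : ℕ} (A : Matrix (Fin n) (Fin n) ℝ) (β : Fin n → ℝ)
    (u φ : Fin n → ℝ → ℝ) : Prop :=
  (∀ i, ∀ r > (0:ℝ), ContDiffAt ℝ 2 (φ i) r) ∧
  (∀ i, ∀ r > (0:ℝ),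
    deriv (fun s => s * deriv (φ i) s) r
      + ∑ j, A i j * r ^ (β j + 1) * Real.exp (u j r) * φ j r = 0)

/-! In the variable `t = log r` the system becomes autonomous: `V i t = u i (exp t) + (2 + β i) * t`
satisfies `V i'' = -∑ j, a i j * exp (V j)`, and differentiating in `t` shows that the derivative
`W i = V i'`, which is `r * u i' + 2 + β i`, solves the linearized system. To see that every bounded
solution `ψ` is a multiple of `W`, write `ψ i' = -∑ j, a i j * f j` with `f j' = exp (V j) * ψ j`;
the claim becomes that all the quotients `g i = f i / exp (V i)` are one and the same constant. They
satisfy the divergence-form system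

  `(exp (V i) * g i')' = ∑ j, a i j * exp (V i) * exp (V j) * (g i - g j)`,

so testing with `g` gives

  `(∑ i, g i * exp (V i) * g i')'`
    `= ∑ i, exp (V i) * g i' ^ 2 + ½ ∑ i j, a i j * exp (V i) * exp (V j) * (g i - g j) ^ 2`.

The bracket on the left tends to `0` at both ends. Indeed `exp (V i) → 0` by finite energy,
`f i → 0` because `ψ` is bounded and `A` is invertible, `g i` is bounded because `|f i'|` is
dominated by a multiple of `|(exp (V i))'|` near the ends, and
`exp (V i) * g i' = exp (V i) * ψ i - f i * W i`. Hence the right-hand side vanishes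
identically, and irreducibility makes all the `g i` equal.
-/

open Filter Topology

section Calculus

variable {E : Type*} [NormedAddCommGroup E] [NormedSpace ℝ E] {f f' : ℝ → E}

theorem eq_zero_of_tendsto_of_hasDerivAt_of_norm_le {l : E} {M : ℝ}
    (hf : ∀ t, HasDerivAt f (f' t) t) (hM : ∀ t, ‖f t‖ ≤ M) (hl : Tendsto f' atTop (𝓝 l)) :
    l = 0 := by
  by_contra hl0
  set δ := ‖l‖ / 2 with hδ
  have hδ_pos : 0 < δ := half_pos (norm_pos_iff.2 hl0)
  obtain ⟨a, ha⟩ := eventually_atTop.1 (hl.eventually (Metric.closedBall_mem_nhds l hδ_pos))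
  have linear_growth (x : ℝ) (hx : 0 ≤ x) : δ * x ≤ 2 * M := by
    have hdiff : ‖(f (a + x) - (a + x) • l) - (f a - a • l)‖ ≤ δ * (a + x - a) := by
      refine norm_image_sub_le_of_norm_deriv_le_segment' (f := fun t => f t - t • l)
        (f' := fun t => f' t - l) (fun t _ => ?_)
        (fun t ht => mem_closedBall_iff_norm.1 (ha t ht.1)) (a + x) ⟨by linarith, le_rfl⟩
      simpa using ((hf t).fun_sub ((hasDerivAt_id' t).smul_const l)).hasDerivWithinAt
    have hnorm : x * ‖l‖ ≤ M + M + δ * (a + x - a) :=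
      calc x * ‖l‖ = ‖x • l‖ := by rw [norm_smul, Real.norm_of_nonneg hx]
        _ = ‖f (a + x) - f a - ((f (a + x) - (a + x) • l) - (f a - a • l))‖ := by
            congr 1; module
        _ ≤ M + M + δ * (a + x - a) :=
            norm_sub_le_of_le (norm_sub_le_of_le (hM _) (hM _)) hdiff
    linarith [show x * ‖l‖ = 2 * (δ * x) by rw [hδ]; ring]
  have hM0 : 0 ≤ M := (norm_nonneg _).trans (hM 0)
  have := linear_growth ((2 * M + 1) / δ) (by positivity)
  rw [mul_div_cancel₀ _ hδ_pos.ne'] at this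
  linarith

theorem norm_le_of_norm_hasDerivAt_le_neg_of_tendsto_zero {h h' : ℝ → ℝ} {a : ℝ}
    (hf : ∀ t ≥ a, HasDerivAt f (f' t) t) (hh : ∀ t ≥ a, HasDerivAt h (h' t) t)
    (hle : ∀ t ≥ a, ‖f' t‖ ≤ -h' t) (hf0 : Tendsto f atTop (𝓝 0)) (hh0 : Tendsto h atTop (𝓝 0)) :
    ∀ t ≥ a, ‖f t‖ ≤ h t := by
  intro t ht
  have increment (s : ℝ) (hs : t ≤ s) : ‖f s - f t‖ ≤ h t - h s := by
    refine image_norm_le_of_norm_deriv_right_le_deriv_boundary' (a := t) (b := s)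
      (f := fun s => f s - f t) (f' := f') (B := fun s => h t - h s) (B' := fun s => -h' s)
      (fun x hx => ?_) (fun x hx => ?_) (by simp) (fun x hx => ?_) (fun x hx => ?_)
      (fun x hx => hle x (ht.le.trans hx.1)) ⟨hs, le_rfl⟩
    · exact ((hf x (ht.le.trans hx.1)).sub_const _).continuousAt.continuousWithinAt
    · exact ((hf x (ht.le.trans hx.1)).sub_const _).hasDerivWithinAt
    · exact ((hh x (ht.le.trans hx.1)).const_sub _).continuousAt.continuousWithinAt
    · exact ((hh x (ht.le.trans hx.1)).const_sub _).hasDerivWithinAt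
  have hlim := le_of_tendsto_of_tendsto (hf0.sub_const (f t)).norm (hh0.const_sub (h t))
    ((eventually_ge_atTop t).mono increment)
  simpa using hlim

theorem exists_norm_le_of_hasDerivAt_of_integrable [CompleteSpace E]
    (hf : ∀ t, HasDerivAt f (f' t) t) (hf' : Integrable f') : ∃ B, ∀ t, ‖f t‖ ≤ B := by
  refine ⟨‖f 0‖ + ∫ s, ‖f' s‖, fun t => ?_⟩
  have hdiff : ‖f t - f 0‖ ≤ ∫ s, ‖f' s‖ := by
    rw [← intervalIntegral.integral_eq_sub_of_hasDerivAt (fun s _ => hf s) hf'.intervalIntegrable]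
    exact intervalIntegral.norm_integral_le_integral_norm_uIoc.trans
      (setIntegral_le_integral hf'.norm (Eventually.of_forall fun s => norm_nonneg _))
  linarith [norm_le_norm_add_norm_sub' (f t) (f 0)]

theorem eq_zero_of_hasDerivAt_of_nonneg_of_tendsto {Q R : ℝ → ℝ} {c : ℝ}
    (hQ : ∀ t, HasDerivAt Q (R t) t) (hR : ∀ t, 0 ≤ R t)
    (hbot : Tendsto Q atBot (𝓝 c)) (htop : Tendsto Q atTop (𝓝 c)) (t : ℝ) : R t = 0 := by
  have hmono : Monotone Q := monotone_of_hasDerivAt_nonneg hQ hR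
  have hconst : Q = fun _ => c :=
    funext fun s => le_antisymm (hmono.ge_of_tendsto htop s) (hmono.le_of_tendsto hbot s)
  exact (hQ t).unique (hconst ▸ hasDerivAt_const t c)

theorem integrable_exp_mul_comp_exp_iff {F : ℝ → ℝ} :
    Integrable (fun t => Real.exp t * F (Real.exp t)) ↔ IntegrableOn F (Ioi 0) := by
  rw [← Real.range_exp, ← image_univ, integrableOn_image_iff_integrableOn_abs_deriv_smul
    MeasurableSet.univ (fun t _ => (Real.hasDerivAt_exp t).hasDerivWithinAt)
    Real.exp_injective.injOn, integrableOn_univ]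
  simp only [smul_eq_mul, Real.abs_exp]

theorem hasDerivAt_comp_neg_id {t : ℝ} {l : E} (hf : HasDerivAt f l (-t)) :
    HasDerivAt (fun s => f (-s)) (-l) t := by
  simpa [Function.comp_def] using hf.scomp t (hasDerivAt_neg t)

theorem hasDerivAt_comp_exp {t : ℝ} (hf : DifferentiableAt ℝ f (Real.exp t)) :
    HasDerivAt (fun s => f (Real.exp s)) (Real.exp t • deriv f (Real.exp t)) t :=
  hf.hasDerivAt.scomp t (Real.hasDerivAt_exp t)

end Calculus

section WeightedLaplacian

variable {ι : Type*} [Fintype ι]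

theorem sum_mul_sum_mul_sub_of_isSymm {c : Matrix ι ι ℝ} (hc : c.IsSymm) (x : ι → ℝ) :
    ∑ i, x i * ∑ j, c i j * (x i - x j) = 1 / 2 * ∑ i, ∑ j, c i j * (x i - x j) ^ 2 := by
  have hswap : ∑ i, ∑ j, c i j * (x j * (x j - x i)) = ∑ i, ∑ j, c i j * (x i * (x i - x j)) := by
    rw [Finset.sum_comm]
    simp only [hc.apply]
  have hsq : ∑ i, ∑ j, c i j * (x i - x j) ^ 2
      = ∑ i, ∑ j, c i j * (x i * (x i - x j)) + ∑ i, ∑ j, c i j * (x j * (x j - x i)) := by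
    simp only [← Finset.sum_add_distrib]
    exact Finset.sum_congr rfl fun i _ => Finset.sum_congr rfl fun j _ => by ring
  rw [hsq, hswap, ← two_mul, ← mul_assoc, one_div, inv_mul_cancel₀ two_ne_zero, one_mul]
  simp only [Finset.mul_sum, mul_left_comm]

variable {ρ g h : ι → ℝ → ℝ} {c : ℝ → Matrix ι ι ℝ}

theorem hasDerivAt_sum_mul_flux {t : ℝ} (hc : (c t).IsSymm) (hg : ∀ i, HasDerivAt (g i) (h i t) t)
    (hflux : ∀ i, HasDerivAt (fun s => ρ i s * h i s) (∑ j, c t i j * (g i t - g j t)) t) :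
    HasDerivAt (fun s => ∑ i, g i s * (ρ i s * h i s))
      (∑ i, ρ i t * h i t ^ 2 + 1 / 2 * ∑ i, ∑ j, c t i j * (g i t - g j t) ^ 2) t := by
  refine (HasDerivAt.fun_sum fun i _ => (hg i).fun_mul (hflux i)).congr_deriv ?_
  rw [Finset.sum_add_distrib, sum_mul_sum_mul_sub_of_isSymm hc]
  congr 1
  exact Finset.sum_congr rfl fun i _ => by ring

theorem eq_zero_and_eq_of_flux_tendsto_zero (hρ : ∀ i t, 0 < ρ i t) (hc : ∀ t, (c t).IsSymm)
    (hc_nonneg : ∀ t i j, 0 ≤ c t i j) (hg : ∀ i t, HasDerivAt (g i) (h i t) t)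
    (hflux : ∀ i t, HasDerivAt (fun s => ρ i s * h i s) (∑ j, c t i j * (g i t - g j t)) t)
    (hbot : Tendsto (fun t => ∑ i, g i t * (ρ i t * h i t)) atBot (𝓝 0))
    (htop : Tendsto (fun t => ∑ i, g i t * (ρ i t * h i t)) atTop (𝓝 0)) (t : ℝ) :
    (∀ i, h i t = 0) ∧ ∀ i j, c t i j ≠ 0 → g i t = g j t := by
  have hkin (t : ℝ) (i : ι) : 0 ≤ ρ i t * h i t ^ 2 := mul_nonneg (hρ i t).le (sq_nonneg _)
  have hpot (t : ℝ) (i j : ι) : 0 ≤ c t i j * (g i t - g j t) ^ 2 :=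
    mul_nonneg (hc_nonneg t i j) (sq_nonneg _)
  have hkin_sum (t : ℝ) : 0 ≤ ∑ i, ρ i t * h i t ^ 2 := Finset.sum_nonneg fun i _ => hkin t i
  have hpot_sum (t : ℝ) : 0 ≤ ∑ i, ∑ j, c t i j * (g i t - g j t) ^ 2 :=
    Finset.sum_nonneg fun i _ => Finset.sum_nonneg fun j _ => hpot t i j
  have hzero := eq_zero_of_hasDerivAt_of_nonneg_of_tendsto
    (fun t => hasDerivAt_sum_mul_flux (hc t) (fun i => hg i t) (fun i => hflux i t))
    (fun t => add_nonneg (hkin_sum t) (mul_nonneg one_half_pos.le (hpot_sum t))) hbot htop t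
  have hkin_zero : ∑ i, ρ i t * h i t ^ 2 = 0 := by linarith [hkin_sum t, hpot_sum t]
  have hpot_zero : ∑ i, ∑ j, c t i j * (g i t - g j t) ^ 2 = 0 := by
    linarith [hkin_sum t, hpot_sum t]
  refine ⟨fun i => ?_, fun i j hij => ?_⟩
  · rw [Finset.sum_eq_zero_iff_of_nonneg fun i _ => hkin t i] at hkin_zero
    simpa [(hρ i t).ne'] using hkin_zero i (Finset.mem_univ i)
  · rw [Finset.sum_eq_zero_iff_of_nonneg fun i _ => Finset.sum_nonneg fun j _ => hpot t i j]
      at hpot_zero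
    have hrow := hpot_zero i (Finset.mem_univ i)
    rw [Finset.sum_eq_zero_iff_of_nonneg fun j _ => hpot t i j] at hrow
    simpa [hij, sub_eq_zero] using hrow j (Finset.mem_univ j)

theorem eq_of_forall_exists_rel_compl {α : Type*} [DecidableEq ι] {r : ι → ι → Prop}
    (hr : ∀ S : Finset ι, S.Nonempty → S ≠ Finset.univ → ∃ i ∈ S, ∃ j ∈ Sᶜ, r i j)
    {x : ι → α} (hx : ∀ i j, r i j → x i = x j) (i j : ι) : x i = x j := by
  classical
  let S : Finset ι := {k | x k = x i}
  have hS : S = Finset.univ := by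
    by_contra hne
    obtain ⟨k, hk, l, hl, hkl⟩ := hr S ⟨i, by simp [S]⟩ hne
    simp only [S, Finset.mem_compl, Finset.mem_filter_univ] at hk hl
    exact hl ((hx k l hkl).symm.trans hk)
  have hj : j ∈ S := hS ▸ Finset.mem_univ j
  exact ((Finset.mem_filter_univ j).1 hj).symm

end WeightedLaplacian

/-- Finite-energy solutions of the Liouville system in the variable `t = log r`, where the weights
`r ^ β j` disappear: `V i` stands for `u i (exp t) + (2 + β i) * t` and `W i` for its derivative. -/
structure LogLiouvilleSolution {ι : Type*} [Fintype ι] (A : Matrix ι ι ℝ) (V W : ι → ℝ → ℝ) :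
    Prop where
  hasDerivAt_potential : ∀ i t, HasDerivAt (V i) (W i t) t
  hasDerivAt_slope : ∀ i t, HasDerivAt (W i) (-∑ j, A i j * Real.exp (V j t)) t
  integrable_exp : ∀ i, Integrable fun t => Real.exp (V i t)

/-- Bounded solutions `ψ` of the linearization at `V` of the system in `t = log r`. The second-order
system `ψ i'' = -∑ j, A i j * exp (V j) * ψ j` is encoded as a first-order one through a primitive
`f j` of `exp (V j) * ψ j`, normalized so that `ψ i' = -∑ j, A i j * f j`. -/
structure BoundedLogLinearizedSolution {ι : Type*} [Fintype ι] (A : Matrix ι ι ℝ)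
    (V ψ f : ι → ℝ → ℝ) : Prop where
  hasDerivAt_perturbation : ∀ i t, HasDerivAt (ψ i) (-∑ j, A i j * f j t) t
  hasDerivAt_primitive : ∀ i t, HasDerivAt (f i) (Real.exp (V i t) * ψ i t) t
  bounded : ∃ M, ∀ i t, |ψ i t| ≤ M

/-- The quotient `g i = f i / exp (V i)`, through which the multiples `ψ = C * W` of the translation
mode are characterized by `g i = C` for all `i`. -/
noncomputable def expQuotient {ι : Type*} (V f : ι → ℝ → ℝ) (i : ι) (t : ℝ) : ℝ :=
  f i t / Real.exp (V i t)

theorem exp_mul_sub_expQuotient_mul {ι : Type*} (V f : ι → ℝ → ℝ) (i : ι) (t x y : ℝ) :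
    Real.exp (V i t) * (x - expQuotient V f i t * y) = Real.exp (V i t) * x - f i t * y := by
  simp only [expQuotient]
  field_simp

section LogVariable

variable {ι : Type*} [Fintype ι] {A : Matrix ι ι ℝ} {V W ψ f : ι → ℝ → ℝ}

namespace LogLiouvilleSolution

theorem reflect (hV : LogLiouvilleSolution A V W) :
    LogLiouvilleSolution A (fun i t => V i (-t)) (fun i t => -W i (-t)) where
  hasDerivAt_potential i t := hasDerivAt_comp_neg_id (hV.hasDerivAt_potential i (-t))
  hasDerivAt_slope i t :=
    (hasDerivAt_comp_neg_id (hV.hasDerivAt_slope i (-t))).fun_neg.congr_deriv (neg_neg _)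
  integrable_exp i := (hV.integrable_exp i).comp_neg

theorem hasDerivAt_exp (hV : LogLiouvilleSolution A V W) (i : ι) (t : ℝ) :
    HasDerivAt (fun s => Real.exp (V i s)) (Real.exp (V i t) * W i t) t :=
  (hV.hasDerivAt_potential i t).exp

theorem exists_abs_slope_le (hV : LogLiouvilleSolution A V W) (i : ι) :
    ∃ B, ∀ t, |W i t| ≤ B :=
  exists_norm_le_of_hasDerivAt_of_integrable (hV.hasDerivAt_slope i)
    (integrable_finsetSum _ fun j _ => (hV.integrable_exp j).const_mul _).neg

theorem tendsto_exp_atTop (hV : LogLiouvilleSolution A V W) (i : ι) :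
    Tendsto (fun t => Real.exp (V i t)) atTop (𝓝 0) := by
  obtain ⟨B, hB⟩ := hV.exists_abs_slope_le i
  have hW : Continuous (W i) :=
    continuous_iff_continuousAt.2 fun t => (hV.hasDerivAt_slope i t).continuousAt
  have hderiv : Integrable fun t => Real.exp (V i t) * W i t :=
    (hV.integrable_exp i).mul_bdd hW.aestronglyMeasurable (Eventually.of_forall hB)
  exact tendsto_zero_of_hasDerivAt_of_integrableOn_Ioi (a := 0) (fun t _ => hV.hasDerivAt_exp i t)
    hderiv.integrableOn (hV.integrable_exp i).integrableOn

theorem exists_slope_neg (hV : LogLiouvilleSolution A V W) (i : ι) : ∃ t, W i t < 0 := by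
  by_contra! hW
  have hmono : Monotone (V i) := monotone_of_hasDerivAt_nonneg (hV.hasDerivAt_potential i) hW
  have hle : Real.exp (V i 0) ≤ 0 := ge_of_tendsto (hV.tendsto_exp_atTop i)
    ((eventually_ge_atTop 0).mono fun t ht => Real.exp_le_exp.2 (hmono ht))
  exact hle.not_gt (Real.exp_pos _)

theorem antitone_slope (hV : LogLiouvilleSolution A V W) (hA : ∀ i j, 0 ≤ A i j) (i : ι) :
    Antitone (W i) :=
  antitone_of_hasDerivAt_nonpos (hV.hasDerivAt_slope i) fun t =>
    neg_nonpos.2 (Finset.sum_nonneg fun j _ => mul_nonneg (hA i j) (Real.exp_pos (V j t)).le)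

end LogLiouvilleSolution

namespace BoundedLogLinearizedSolution

theorem reflect (hψ : BoundedLogLinearizedSolution A V ψ f) :
    BoundedLogLinearizedSolution A (fun i t => V i (-t)) (fun i t => ψ i (-t))
      (fun i t => -f i (-t)) where
  hasDerivAt_perturbation i t :=
    (hasDerivAt_comp_neg_id (hψ.hasDerivAt_perturbation i (-t))).congr_deriv (by simp)
  hasDerivAt_primitive i t :=
    (hasDerivAt_comp_neg_id (hψ.hasDerivAt_primitive i (-t))).fun_neg.congr_deriv (neg_neg _)
  bounded := hψ.bounded.imp fun _ hM i t => hM i (-t)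

theorem integrable_exp_mul (hψ : BoundedLogLinearizedSolution A V ψ f)
    (hV : LogLiouvilleSolution A V W) (i : ι) :
    Integrable fun t => Real.exp (V i t) * ψ i t := by
  obtain ⟨M, hM⟩ := hψ.bounded
  have hcont : Continuous (ψ i) :=
    continuous_iff_continuousAt.2 fun t => (hψ.hasDerivAt_perturbation i t).continuousAt
  exact (hV.integrable_exp i).mul_bdd hcont.aestronglyMeasurable (Eventually.of_forall (hM i))

theorem tendsto_primitive_atTop (hψ : BoundedLogLinearizedSolution A V ψ f)
    (hV : LogLiouvilleSolution A V W) (hA : Function.Injective A.mulVec) (i : ι) :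
    Tendsto (f i) atTop (𝓝 0) := by
  obtain ⟨M, hM⟩ := hψ.bounded
  have hlim (j : ι) : Tendsto (f j) atTop (𝓝 (limUnder atTop (f j))) :=
    tendsto_limUnder_of_hasDerivAt_of_integrableOn_Ioi (a := 0)
      (fun t _ => hψ.hasDerivAt_primitive j t) (hψ.integrable_exp_mul hV j).integrableOn
  have hkernel : A.mulVec (fun j => limUnder atTop (f j)) = A.mulVec 0 := by
    ext k
    rw [Matrix.mulVec_zero, Pi.zero_apply, ← neg_eq_zero]
    exact eq_zero_of_tendsto_of_hasDerivAt_of_norm_le (hψ.hasDerivAt_perturbation k) (hM k)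
      (tendsto_finsetSum _ fun j _ => (hlim j).const_mul (A k j)).neg
  simpa only [congrFun (hA hkernel) i, Pi.zero_apply] using hlim i

theorem exists_abs_expQuotient_le_atTop (hψ : BoundedLogLinearizedSolution A V ψ f)
    (hV : LogLiouvilleSolution A V W) (hA : ∀ i j, 0 ≤ A i j)
    (hA_inj : Function.Injective A.mulVec) (i : ι) :
    ∃ K, ∀ᶠ t in atTop, |expQuotient V f i t| ≤ K := by
  obtain ⟨M, hM⟩ := hψ.bounded
  obtain ⟨a, ha⟩ := hV.exists_slope_neg i
  have hM0 : 0 ≤ M := (abs_nonneg _).trans (hM i 0)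
  set K := M / -W i a
  have hK0 : 0 ≤ K := div_nonneg hM0 (neg_pos.2 ha).le
  have bound (t : ℝ) (ht : t ≥ a) : M ≤ K * -W i t :=
    calc M = K * -W i a := (div_mul_cancel₀ _ (neg_pos.2 ha).ne').symm
      _ ≤ K * -W i t := by gcongr; exact hV.antitone_slope hA i ht
  have hf : ∀ t ≥ a, ‖f i t‖ ≤ K * Real.exp (V i t) := by
    refine norm_le_of_norm_hasDerivAt_le_neg_of_tendsto_zero
      (fun t _ => hψ.hasDerivAt_primitive i t) (fun t _ => (hV.hasDerivAt_exp i t).const_mul K)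
      (fun t ht => ?_) (hψ.tendsto_primitive_atTop hV hA_inj i)
      (by simpa using (hV.tendsto_exp_atTop i).const_mul K)
    calc ‖Real.exp (V i t) * ψ i t‖ = Real.exp (V i t) * |ψ i t| := by
          rw [Real.norm_eq_abs, abs_mul, Real.abs_exp]
      _ ≤ Real.exp (V i t) * (K * -W i t) := by gcongr; exact (hM i t).trans (bound t ht)
      _ = -(K * (Real.exp (V i t) * W i t)) := by ring
  refine ⟨K, (eventually_ge_atTop a).mono fun t ht => ?_⟩
  rw [expQuotient, abs_div, Real.abs_exp, div_le_iff₀ (Real.exp_pos _)]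
  exact hf t ht

theorem hasDerivAt_expQuotient (hψ : BoundedLogLinearizedSolution A V ψ f)
    (hV : LogLiouvilleSolution A V W) (i : ι) (t : ℝ) :
    HasDerivAt (expQuotient V f i) (ψ i t - expQuotient V f i t * W i t) t := by
  refine ((hψ.hasDerivAt_primitive i t).div (hV.hasDerivAt_exp i t)
    (Real.exp_ne_zero _)).congr_deriv ?_
  simp only [expQuotient]
  field_simp

theorem hasDerivAt_expQuotient_flux (hψ : BoundedLogLinearizedSolution A V ψ f)
    (hV : LogLiouvilleSolution A V W) (i : ι) (t : ℝ) :
    HasDerivAt (fun s => Real.exp (V i s) * (ψ i s - expQuotient V f i s * W i s))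
      (∑ j, Real.exp (V i t) * A i j * Real.exp (V j t)
        * (expQuotient V f i t - expQuotient V f j t)) t := by
  simp only [exp_mul_sub_expQuotient_mul]
  refine (((hV.hasDerivAt_exp i t).mul (hψ.hasDerivAt_perturbation i t)).sub
    ((hψ.hasDerivAt_primitive i t).mul (hV.hasDerivAt_slope i t))).congr_deriv ?_
  have hterm (j : ι) : Real.exp (V i t) * A i j * Real.exp (V j t)
      * (expQuotient V f i t - expQuotient V f j t)
      = f i t * (A i j * Real.exp (V j t)) - Real.exp (V i t) * (A i j * f j t) := by
    simp only [expQuotient]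
    field_simp
  simp only [hterm, Finset.sum_sub_distrib, ← Finset.mul_sum]
  ring

theorem tendsto_sum_expQuotient_mul_flux_atTop (hψ : BoundedLogLinearizedSolution A V ψ f)
    (hV : LogLiouvilleSolution A V W) (hA : ∀ i j, 0 ≤ A i j)
    (hA_inj : Function.Injective A.mulVec) :
    Tendsto (fun t => ∑ i, expQuotient V f i t
      * (Real.exp (V i t) * (ψ i t - expQuotient V f i t * W i t))) atTop (𝓝 0) := by
  simp only [exp_mul_sub_expQuotient_mul]
  rw [← Finset.sum_const_zero (s := Finset.univ (α := ι))]
  refine tendsto_finsetSum _ fun i _ => ?_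
  obtain ⟨M, hM⟩ := hψ.bounded
  obtain ⟨B, hB⟩ := hV.exists_abs_slope_le i
  obtain ⟨K, hK⟩ := hψ.exists_abs_expQuotient_le_atTop hV hA hA_inj i
  have hflux : Tendsto (fun t => Real.exp (V i t) * ψ i t - f i t * W i t) atTop (𝓝 0) := by
    simpa using ((hV.tendsto_exp_atTop i).zero_mul_isBoundedUnder_le
      (isBoundedUnder_of ⟨M, hM i⟩)).sub
      ((hψ.tendsto_primitive_atTop hV hA_inj i).zero_mul_isBoundedUnder_le
        (isBoundedUnder_of ⟨B, hB⟩))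
  exact isBoundedUnder_le_mul_tendsto_zero (isBoundedUnder_of_eventually_le hK) hflux

theorem tendsto_sum_expQuotient_mul_flux_atBot (hψ : BoundedLogLinearizedSolution A V ψ f)
    (hV : LogLiouvilleSolution A V W) (hA : ∀ i j, 0 ≤ A i j)
    (hA_inj : Function.Injective A.mulVec) :
    Tendsto (fun t => ∑ i, expQuotient V f i t
      * (Real.exp (V i t) * (ψ i t - expQuotient V f i t * W i t))) atBot (𝓝 0) := by
  have hrefl := ((hψ.reflect.tendsto_sum_expQuotient_mul_flux_atTop hV.reflect hA hA_inj).comp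
    tendsto_neg_atBot_atTop).neg
  simpa [Function.comp_def, expQuotient, neg_div] using hrefl

theorem exists_eq_const_mul_slope [DecidableEq ι] (hψ : BoundedLogLinearizedSolution A V ψ f)
    (hV : LogLiouvilleSolution A V W) (hA_symm : A.IsSymm) (hA : ∀ i j, 0 ≤ A i j)
    (hA_irr : ∀ S : Finset ι, S.Nonempty → S ≠ Finset.univ → ∃ i ∈ S, ∃ j ∈ Sᶜ, A i j ≠ 0)
    (hA_inj : Function.Injective A.mulVec) : ∃ C, ∀ i t, ψ i t = C * W i t := by
  have hrigid := eq_zero_and_eq_of_flux_tendsto_zero (ρ := fun i t => Real.exp (V i t))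
    (c := fun t => .of fun i j => Real.exp (V i t) * A i j * Real.exp (V j t))
    (fun i t => Real.exp_pos _)
    (fun t => Matrix.IsSymm.ext fun i j => by simp only [Matrix.of_apply, hA_symm.apply]; ring)
    (fun t i j => mul_nonneg (mul_nonneg (Real.exp_pos _).le (hA i j)) (Real.exp_pos _).le)
    (hψ.hasDerivAt_expQuotient hV) (hψ.hasDerivAt_expQuotient_flux hV)
    (hψ.tendsto_sum_expQuotient_mul_flux_atBot hV hA hA_inj)
    (hψ.tendsto_sum_expQuotient_mul_flux_atTop hV hA hA_inj)
  have hconst (i : ι) (t : ℝ) : expQuotient V f i t = expQuotient V f i 0 :=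
    is_const_of_deriv_eq_zero (fun s => (hψ.hasDerivAt_expQuotient hV i s).differentiableAt)
      (fun s => (hψ.hasDerivAt_expQuotient hV i s).deriv.trans ((hrigid s).1 i)) t 0
  have heq : ∀ i j, expQuotient V f i 0 = expQuotient V f j 0 :=
    eq_of_forall_exists_rel_compl hA_irr fun i j hij => (hrigid 0).2 i j (by simpa using hij)
  rcases isEmpty_or_nonempty ι with _ | ⟨⟨k⟩⟩
  · exact ⟨0, isEmptyElim⟩
  · refine ⟨expQuotient V f k 0, fun i t => ?_⟩
    rw [← heq i k, ← hconst i t]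
    exact sub_eq_zero.1 ((hrigid t).1 i)

end BoundedLogLinearizedSolution

end LogVariable

section RadialVariable

theorem hasDerivAt_mul_deriv_of_contDiffAt_two {v : ℝ → ℝ} {r : ℝ} (hv : ContDiffAt ℝ 2 v r) :
    HasDerivAt (fun s => s * deriv v s) (deriv v r + r * deriv (deriv v) r) r := by
  have hdiff : DifferentiableAt ℝ (deriv v) r :=
    (hv.derivWithin (m := 1) one_add_one_eq_two.le).differentiableAt one_ne_zero
  simpa using (hasDerivAt_id' r).fun_mul hdiff.hasDerivAt

theorem hasDerivAt_mulVec_apply {m n : Type*} [Fintype n] (B : Matrix m n ℝ) {v : n → ℝ → ℝ}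
    {v' : n → ℝ} {t : ℝ} (hv : ∀ j, HasDerivAt (v j) (v' j) t) (i : m) :
    HasDerivAt (fun s => B.mulVec (fun j => v j s) i) (B.mulVec v' i) t :=
  HasDerivAt.fun_sum fun j _ => (hv j).const_mul (B i j)

variable {n : ℕ} {A : Matrix (Fin n) (Fin n) ℝ} {β : Fin n → ℝ} {u φ : Fin n → ℝ → ℝ}

/-- The solution in the variable `t = log r`: the weight `r ^ β i`, together with the Jacobian
factor `r ^ 2`, is absorbed so that `exp (logPotential β u i t) = r ^ (β i + 2) * exp (u i r)`. -/
noncomputable def logPotential (β : Fin n → ℝ) (u : Fin n → ℝ → ℝ) (i : Fin n) (t : ℝ) : ℝ :=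
  u i (Real.exp t) + (2 + β i) * t

theorem exp_logPotential (i : Fin n) (t : ℝ) :
    Real.exp (logPotential β u i t)
      = Real.exp t * (Real.exp t ^ (β i + 1) * Real.exp (u i (Real.exp t))) := by
  rw [logPotential, ← Real.exp_mul, ← Real.exp_add, ← Real.exp_add]
  congr 1
  ring

theorem RadialSolution.deriv_mul_deriv (hu : RadialSolution A β u) (i : Fin n) {r : ℝ}
    (hr : 0 < r) :
    deriv (fun s => s * deriv (u i) s) r
      = -∑ j, A i j * (r ^ (β j + 1) * Real.exp (u j r)) := by
  have hsum : ∑ j, A i j * (r ^ (β j + 1) * Real.exp (u j r))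
      = r * ∑ j, A i j * r ^ β j * Real.exp (u j r) := by
    rw [Finset.mul_sum]
    refine Finset.sum_congr rfl fun j _ => ?_
    rw [Real.rpow_add_one hr.ne']
    ring
  rw [(hasDerivAt_mul_deriv_of_contDiffAt_two (hu.1 i r hr)).deriv, hsum]
  have hode := hu.2.1 i r hr
  field_simp at hode
  linarith

theorem RadialSolution.logLiouvilleSolution (hu : RadialSolution A β u) :
    LogLiouvilleSolution A (logPotential β u)
      (fun i t => Real.exp t * deriv (u i) (Real.exp t) + (2 + β i)) where
  hasDerivAt_potential i t := by
    have hdiff := (hu.1 i _ (Real.exp_pos t)).differentiableAt two_ne_zero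
    exact ((hasDerivAt_comp_exp hdiff).fun_add
      ((hasDerivAt_id' t).const_mul (2 + β i))).congr_deriv (by simp)
  hasDerivAt_slope i t := by
    refine ((hasDerivAt_comp_exp (hasDerivAt_mul_deriv_of_contDiffAt_two
      (hu.1 i _ (Real.exp_pos t))).differentiableAt).add_const (2 + β i)).congr_deriv ?_
    rw [hu.deriv_mul_deriv i (Real.exp_pos t), smul_neg, smul_eq_mul, Finset.mul_sum]
    simp only [exp_logPotential, mul_left_comm]
  integrable_exp i := by
    simp only [exp_logPotential]
    exact integrable_exp_mul_comp_exp_iff.2 (hu.2.2 i)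

theorem LinearizedSolution.hasDerivAt_exp_mul_deriv (hφ : LinearizedSolution A β u φ) (i : Fin n)
    (t : ℝ) :
    HasDerivAt (fun s => Real.exp s * deriv (φ i) (Real.exp s))
      (-A.mulVec (fun j => Real.exp (logPotential β u j t) * φ j (Real.exp t)) i) t := by
  refine (hasDerivAt_comp_exp (hasDerivAt_mul_deriv_of_contDiffAt_two
    (hφ.1 i _ (Real.exp_pos t))).differentiableAt).congr_deriv ?_
  rw [eq_neg_of_add_eq_zero_left (hφ.2 i _ (Real.exp_pos t)), smul_neg, smul_eq_mul,
    Finset.mul_sum]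
  refine congrArg Neg.neg (Finset.sum_congr rfl fun j _ => ?_)
  simp only [exp_logPotential]
  ring

theorem LinearizedSolution.boundedLogLinearizedSolution (hφ : LinearizedSolution A β u φ)
    (hA : IsUnit A.det) (hbd : ∃ M, ∀ i, ∀ r > 0, |φ i r| ≤ M) :
    BoundedLogLinearizedSolution A (logPotential β u) (fun i t => φ i (Real.exp t))
      (fun i t => -A⁻¹.mulVec (fun j => Real.exp t * deriv (φ j) (Real.exp t)) i) where
  hasDerivAt_perturbation i t := by
    have hdiff := (hφ.1 i _ (Real.exp_pos t)).differentiableAt two_ne_zero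
    refine (hasDerivAt_comp_exp hdiff).congr_deriv ?_
    let P (j : Fin n) : ℝ := Real.exp t * deriv (φ j) (Real.exp t)
    have hinv : A.mulVec (A⁻¹.mulVec P) i = P i := by
      rw [Matrix.mulVec_mulVec, Matrix.mul_nonsing_inv _ hA, Matrix.one_mulVec]
    simpa [Matrix.mulVec, dotProduct, P] using hinv.symm
  hasDerivAt_primitive i t := by
    refine (hasDerivAt_mulVec_apply A⁻¹ (hφ.hasDerivAt_exp_mul_deriv · t) i).fun_neg.congr_deriv ?_
    let F (j : Fin n) : ℝ := Real.exp (logPotential β u j t) * φ j (Real.exp t)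
    change -A⁻¹.mulVec (-A.mulVec F) i = F i
    rw [Matrix.mulVec_neg, Pi.neg_apply, neg_neg, Matrix.mulVec_mulVec,
      Matrix.nonsing_inv_mul _ hA, Matrix.one_mulVec]
  bounded := hbd.imp fun _ hM i t => hM i _ (Real.exp_pos t)

theorem bounded_linearized_solutions_are_multiples_general (hA : H1 A)
    (hu : RadialSolution A β u) (hφ : LinearizedSolution A β u φ)
    (hφbd : ∃ M : ℝ, ∀ i, ∀ r > 0, |φ i r| ≤ M) :
    ∃ C : ℝ, ∀ i, ∀ r > 0, φ i r = C * (r * deriv (u i) r + 2 + β i) := by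
  obtain ⟨hA_symm, hA_nonneg, hA_irr, hA_det⟩ := hA
  have hA_inj : Function.Injective A.mulVec :=
    Matrix.mulVec_injective_of_isUnit ((Matrix.isUnit_iff_isUnit_det A).2 hA_det)
  obtain ⟨C, hC⟩ := (hφ.boundedLogLinearizedSolution hA_det hφbd).exists_eq_const_mul_slope
    hu.logLiouvilleSolution hA_symm hA_nonneg hA_irr hA_inj
  exact ⟨C, fun i r hr => by simpa only [Real.exp_log hr, add_assoc] using hC i (Real.log r)⟩

end RadialVariable

theorem bounded_linearized_solutions_are_multiples {n : ℕ} (hn : 0 < n)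
    (A : Matrix (Fin n) (Fin n) ℝ) (β : Fin n → ℝ)
    (hA : H1 A) (hβ : ∀ i, -2 < β i)
    (u : Fin n → ℝ → ℝ) (hu : RadialSolution A β u)
    (φ : Fin n → ℝ → ℝ) (hφ : LinearizedSolution A β u φ)
    (hφbd : ∃ M : ℝ, ∀ i, ∀ r > (0:ℝ), |φ i r| ≤ M) :
    ∃ C : ℝ, ∀ i, ∀ r > (0:ℝ), φ i r = C * (r * deriv (u i) r + 2 + β i) :=
  bounded_linearized_solutions_are_multiples_general hA hu hφ hφbd
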